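/- Let K ⊂ ℝ³ be compact and δ > 0 be such that for every point (r₀, z) ∈ K one has η(q) = 1 for all q ∈ ℝ² with |q − r₀| ≤ 2δ. Then for every c₀ > 0 and every n ∈ ℕ there is a constant C = C(n, c₀, K, η) such that |p_k(r) − 2π k^{−1} cos(kz)| ≤ C (Re k)^{−n} for all r = (r₀, z) ∈ K and all k ∈ ℂ with Re k ≥ 1 and |Im k| ≤ c₀. -/

import Mathlib

open MeasureTheory Real Classical
open scoped RealInnerProductSpace

noncomputable section

abbrev E2 := EuclideanSpace ℝ (Fin 2)
abbrev E3 := EuclideanSpace ℝ (Fin 3)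

/-- The kernel `S_k(v) = sin(k|v|)/|v|`, with the removable singularity at `0` filled
in by the value `k`. -/
def Skern (k : ℂ) (v : E3) : ℂ :=
  if v = 0 then k else Complex.sin (k * ‖v‖) / (‖v‖ : ℂ)

/-- The embedding `q ↦ (q, 0)` of `ℝ²` into `ℝ³`. -/
def emb2 (q : E2) : E3 := (WithLp.equiv 2 (Fin 3 → ℝ)).symm ![q 0, q 1, 0]

/-- `p_k(r) = ∫_{ℝ²} η(q) S_k(r - (q,0)) dq`. -/
def pfun (η : E2 → ℝ) (k : ℂ) (r : E3) : ℂ :=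
  ∫ q : E2, (η q : ℂ) * Skern k (r - emb2 q)

/-- The projection of an `ℝ³` point onto its first two coordinates. -/
def proj32 (r : E3) : E2 := (WithLp.equiv 2 (Fin 2 → ℝ)).symm ![r 0, r 1]

theorem slice_deriv {V : Type*} [NormedAddCommGroup V] [NormedSpace ℝ V] {δ : ℝ}
    {f : ℝ × V → ℝ} (hf : ContDiffOn ℝ (⊤ : ℕ∞) f {x | δ < x.1}) {ρ : ℝ} (hρ : δ < ρ) (p : V) :
    HasDerivAt (fun t => f (t, p)) (fderiv ℝ f (ρ, p) (1, 0)) ρ := by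
  have hopen : IsOpen {x : ℝ × V | δ < x.1} := isOpen_lt continuous_const continuous_fst
  have h1 : HasFDerivAt f (fderiv ℝ f (ρ, p)) (ρ, p) :=
    ((hf.contDiffAt (hopen.mem_nhds hρ)).differentiableAt (by simp)).hasFDerivAt
  have h2 : HasDerivAt (fun t : ℝ => (t, p)) ((1 : ℝ), (0 : V)) ρ :=
    (hasDerivAt_id ρ).prodMk (hasDerivAt_const ρ p)
  exact h1.comp_hasDerivAt ρ h2

theorem slice_smooth {V : Type*} [NormedAddCommGroup V] [NormedSpace ℝ V] {δ : ℝ}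
    {f : ℝ × V → ℝ} (hf : ContDiffOn ℝ (⊤ : ℕ∞) f {x | δ < x.1}) :
    ContDiffOn ℝ (⊤ : ℕ∞) (fun x => fderiv ℝ f x (1, 0)) {x | δ < x.1} := by
  have hopen : IsOpen {x : ℝ × V | δ < x.1} := isOpen_lt continuous_const continuous_fst
  exact (hf.fderiv_of_isOpen hopen (by norm_cast)).clm_apply contDiffOn_const

theorem slice_cont {V : Type*} [NormedAddCommGroup V] [NormedSpace ℝ V] {δ : ℝ}
    {f : ℝ × V → ℝ} (hf : ContDiffOn ℝ (⊤ : ℕ∞) f {x | δ < x.1}) (p : V) :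
    ContinuousOn (fun t => f (t, p)) (Set.Ioi δ) :=
  hf.continuousOn.comp (by fun_prop) (fun t ht => ht)

theorem nonstat {V : Type*} [NormedAddCommGroup V] [NormedSpace ℝ V] (δ a₁ b₁ a b : ℝ)
    (h1 : δ < a) (h2 : a < a₁) (h3 : b₁ < b) (hab : a ≤ b)
    (P : Set V) (hP : IsCompact P) (φ : ℝ × V → ℝ)
    (hφ : ContDiffOn ℝ (⊤ : ℕ∞) φ {x | δ < x.1})
    (hφ' : ∀ x : ℝ × V, δ < x.1 → fderiv ℝ φ x (1, 0) ≠ 0) (c₀ : ℝ) (n : ℕ) :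
    ∀ G : ℝ × V → ℝ, ContDiffOn ℝ (⊤ : ℕ∞) G {x | δ < x.1} →
      (∀ p ∈ P, ∀ ρ, δ < ρ → (ρ < a₁ ∨ b₁ < ρ) → G (ρ, p) = 0) →
      ∃ C : ℝ, ∀ p ∈ P, ∀ w : ℂ, w ≠ 0 → |w.re| ≤ c₀ →
        ‖∫ ρ in a..b, (G (ρ, p) : ℂ) * Complex.exp (w * (φ (ρ, p) : ℂ))‖ ≤ C / ‖w‖ ^ n := by
  have hsub : Set.Icc a b ×ˢ P ⊆ {x : ℝ × V | δ < x.1} := fun x hx => lt_of_lt_of_le h1 hx.1.1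
  have hcomp : IsCompact (Set.Icc a b ×ˢ P) := isCompact_Icc.prod hP
  induction n with
  | zero =>
    intro G hG _
    obtain ⟨M, hM⟩ := hcomp.exists_bound_of_continuousOn (hG.continuousOn.mono hsub)
    obtain ⟨N, hN⟩ := hcomp.exists_bound_of_continuousOn (hφ.continuousOn.mono hsub)
    refine ⟨M * Real.exp (c₀ * N) * |b - a|, fun p hp w _ hw => ?_⟩
    rw [pow_zero, div_one]
    apply intervalIntegral.norm_integral_le_of_norm_le_const
    intro x hx
    rw [Set.uIoc_of_le hab] at hx
    have hx' : (x, p) ∈ Set.Icc a b ×ˢ P := ⟨⟨hx.1.le, hx.2⟩, hp⟩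
    have e1 := hM _ hx'
    have e2 := hN _ hx'
    rw [norm_mul, Complex.norm_real, Complex.norm_exp]
    have e3 : (w * (φ (x, p) : ℂ)).re ≤ c₀ * N := by
      rw [Complex.re_mul_ofReal]
      calc w.re * φ (x, p) ≤ |w.re * φ (x, p)| := le_abs_self _
        _ = |w.re| * |φ (x, p)| := abs_mul _ _
        _ ≤ c₀ * N := mul_le_mul hw e2 (abs_nonneg _) ((abs_nonneg _).trans hw)
    have : 0 ≤ M := (norm_nonneg _).trans e1
    gcongr
  | succ n ih =>
    intro G hG hG0
    set Q : ℝ × V → ℝ := fun x => G x / fderiv ℝ φ x (1, 0) with hQ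
    have hQs : ContDiffOn ℝ (⊤ : ℕ∞) Q {x | δ < x.1} := hG.div (slice_smooth hφ) hφ'
    have hQ0 : ∀ p ∈ P, ∀ ρ, δ < ρ → (ρ < a₁ ∨ b₁ < ρ) → Q (ρ, p) = 0 := by
      intro p hp ρ h h'
      simp [hQ, hG0 p hp ρ h h']
    obtain ⟨C, hC⟩ := ih (fun x => fderiv ℝ Q x (1, 0)) (slice_smooth hQs) (by
      intro p hp ρ h h'
      have e1 := slice_deriv hQs h p
      have e2 : (fun t => Q (t, p)) =ᶠ[nhds ρ] fun _ => (0 : ℝ) := by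
        have o1 : ∀ᶠ t in nhds ρ, δ < t := lt_mem_nhds h
        have o2 : ∀ᶠ t in nhds ρ, t < a₁ ∨ b₁ < t := by
          rcases h' with h' | h'
          · exact (gt_mem_nhds h').mono fun _ => Or.inl
          · exact (lt_mem_nhds h').mono fun _ => Or.inr
        filter_upwards [o1, o2] with t t1 t2 using hQ0 p hp t t1 t2
      exact (e1.congr_of_eventuallyEq e2.symm).unique (hasDerivAt_const ρ (0:ℝ)))
    refine ⟨C, fun p hp w hw0 hw => ?_⟩
    have hin : ∀ x ∈ Set.uIcc a b, δ < x := by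
      intro x hx
      rw [Set.uIcc_of_le hab] at hx
      exact lt_of_lt_of_le h1 hx.1
    have hcQ' := ((slice_cont (slice_smooth hQs) p).mono hin)
    have hcφ' := ((slice_cont (slice_smooth hφ) p).mono hin)
    have hcφ := ((slice_cont hφ p).mono hin)
    have key := intervalIntegral.integral_mul_deriv_eq_deriv_mul (a := a) (b := b)
      (u := fun ρ => (Q (ρ, p) : ℂ)) (u' := fun ρ => ((fderiv ℝ Q (ρ, p) (1, 0) : ℝ) : ℂ))
      (v := fun ρ => w⁻¹ * Complex.exp (w * (φ (ρ, p) : ℂ)))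
      (v' := fun ρ => w⁻¹ * (Complex.exp (w * (φ (ρ, p) : ℂ)) *
        (w * ((fderiv ℝ φ (ρ, p) (1, 0) : ℝ) : ℂ))))
      (fun x hx => (slice_deriv hQs (hin x hx) p).ofReal_comp)
      (fun x hx => (((slice_deriv hφ (hin x hx) p).ofReal_comp.const_mul w).cexp).const_mul w⁻¹)
      (ContinuousOn.intervalIntegrable (Complex.continuous_ofReal.comp_continuousOn hcQ'))
      (ContinuousOn.intervalIntegrable (continuousOn_const.mul
        ((continuousOn_const.mul (Complex.continuous_ofReal.comp_continuousOn hcφ)).cexp.mul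
          (continuousOn_const.mul (Complex.continuous_ofReal.comp_continuousOn hcφ')))))
    have hb0 : Q (b, p) = 0 := hQ0 p hp b (lt_of_lt_of_le h1 hab) (Or.inr h3)
    have ha0 : Q (a, p) = 0 := hQ0 p hp a h1 (Or.inl h2)
    have e1 : (∫ ρ in a..b, (G (ρ, p) : ℂ) * Complex.exp (w * (φ (ρ, p) : ℂ))) =
        - (w⁻¹ * ∫ ρ in a..b, ((fderiv ℝ Q (ρ, p) (1, 0) : ℝ) : ℂ) *
          Complex.exp (w * (φ (ρ, p) : ℂ))) := by
      rw [← intervalIntegral.integral_const_mul]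
      rw [hb0, ha0] at key
      simp only [Complex.ofReal_zero, zero_mul, sub_zero, zero_sub] at key
      convert key using 1
      · apply intervalIntegral.integral_congr
        intro x hx
        have := hφ' (x, p) (hin x hx)
        have h' : ((fderiv ℝ φ (x, p) (1, 0) : ℝ) : ℂ) ≠ 0 := by exact_mod_cast this
        simp only [hQ, Complex.ofReal_div]
        field_simp
      · congr 1
        apply intervalIntegral.integral_congr
        intro x hx
        simp only
        ring
    rw [e1, norm_neg, norm_mul, norm_inv, pow_succ]
    have := hC p hp w hw0 hw
    have hw' : 0 < ‖w‖ := norm_pos_iff.2 hw0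
    calc ‖w‖⁻¹ * _ ≤ ‖w‖⁻¹ * (C / ‖w‖ ^ n) := by gcongr
      _ = _ := by field_simp

def Phi (x : ℝ × (E3 × ℝ)) : E2 :=
  !₂[x.2.1 0 + x.1 * Real.cos x.2.2, x.2.1 1 + x.1 * Real.sin x.2.2]

def phs (x : ℝ × (E3 × ℝ)) : ℝ := Real.sqrt (x.1 ^ 2 + (x.2.1 2) ^ 2)

def Sk (k : ℂ) (t : ℝ) : ℂ := dslope (fun x : ℂ => Complex.sin (k * x)) 0 (t : ℂ)

theorem Sk_cont (k : ℂ) : Continuous (Sk k) := by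
  have h : Continuous (dslope (fun x : ℂ => Complex.sin (k * x)) 0) := by
    rw [← continuousOn_univ, continuousOn_dslope Filter.univ_mem]
    exact ⟨by fun_prop, by fun_prop⟩
  exact h.comp Complex.continuous_ofReal

theorem Sk_of_ne (k : ℂ) {t : ℝ} (ht : t ≠ 0) : Sk k t = Complex.sin (k * t) / t := by
  have : (t : ℂ) ≠ 0 := by exact_mod_cast ht
  rw [Sk, dslope_of_ne _ this, slope_def_field]
  simp

theorem Skern_eq (k : ℂ) (v : E3) : Skern k v = Sk k ‖v‖ := by
  unfold Skern
  split_ifs with h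
  · subst h
    have : HasDerivAt (fun x : ℂ => Complex.sin (k * x)) (Complex.cos (k * 0) * (k * 1)) 0 :=
      ((hasDerivAt_id (0:ℂ)).const_mul k).csin
    rw [norm_zero, Sk, Complex.ofReal_zero, dslope_same, this.deriv]
    simp
  · rw [Sk_of_ne k (norm_ne_zero_iff.2 h)]

theorem Phi_smooth : ContDiff ℝ (⊤ : ℕ∞) Phi := by
  rw [contDiff_euclidean]
  intro i
  have h : ∀ j : Fin 3, ContDiff ℝ (⊤ : ℕ∞) (fun x : ℝ × (E3 × ℝ) => x.2.1 j) := fun j =>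
    (contDiff_euclidean (f := fun x : ℝ × (E3 × ℝ) => x.2.1)).1 (by fun_prop) j
  have h0 := h 0
  have h1 := h 1
  fin_cases i
  · simp only [Phi]
    exact h0.add (contDiff_fst.mul (Real.contDiff_cos.comp (by fun_prop)))
  · simp only [Phi]
    exact h1.add (contDiff_fst.mul (Real.contDiff_sin.comp (by fun_prop)))

theorem phs_cont : Continuous phs := by
  unfold phs
  fun_prop

theorem phs_smooth (δ : ℝ) (hδ : 0 < δ) : ContDiffOn ℝ (⊤ : ℕ∞) phs {x | δ < x.1} := by
  intro x hx
  have h : ContDiff ℝ (⊤ : ℕ∞) (fun x : ℝ × (E3 × ℝ) => x.2.1 2) :=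
    (contDiff_euclidean (f := fun x : ℝ × (E3 × ℝ) => x.2.1)).1 (by fun_prop) 2
  have hx' : 0 < x.1 := hδ.trans hx
  apply ContDiffAt.contDiffWithinAt
  exact ContDiffAt.sqrt ((contDiff_fst.pow 2).add (h.pow 2)).contDiffAt (by positivity)

theorem phs_deriv {ρ : ℝ} (hρ : 0 < ρ) (p : E3 × ℝ) :
    HasDerivAt (fun t => phs (t, p)) (ρ / phs (ρ, p)) ρ := by
  have h : HasDerivAt (fun t : ℝ => t ^ 2 + (p.1 2) ^ 2) (2 * ρ) ρ := by
    simpa using (hasDerivAt_pow 2 ρ).add_const ((p.1 2) ^ 2)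
  have := h.sqrt (by positivity)
  rw [mul_div_mul_left _ _ two_ne_zero] at this
  exact this

theorem phs_pos {ρ : ℝ} (hρ : 0 < ρ) (p : E3 × ℝ) : 0 < phs (ρ, p) :=
  Real.sqrt_pos.2 (by positivity)

theorem norm_Phi (ρ : ℝ) (r : E3) (θ : ℝ) : ‖r - emb2 (Phi (ρ, r, θ))‖ = phs (ρ, r, θ) := by
  rw [EuclideanSpace.norm_eq, phs, Fin.sum_univ_three]
  congr 1
  simp [emb2, Phi, mul_pow]
  linear_combination ρ ^ 2 * Real.sin_sq_add_cos_sq θ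

theorem norm_Phi_sub (ρ : ℝ) (r : E3) (θ : ℝ) : ‖Phi (ρ, r, θ) - proj32 r‖ = |ρ| := by
  rw [EuclideanSpace.norm_eq, Fin.sum_univ_two, ← Real.sqrt_sq_eq_abs]
  congr 1
  simp [proj32, Phi, mul_pow]
  linear_combination ρ ^ 2 * Real.sin_sq_add_cos_sq θ

theorem norm_proj32 (r : E3) : ‖proj32 r‖ ≤ ‖r‖ := by
  rw [EuclideanSpace.norm_eq, EuclideanSpace.norm_eq, Fin.sum_univ_two, Fin.sum_univ_three]
  apply Real.sqrt_le_sqrt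
  simp [proj32]
  positivity

theorem to_prod (f : E2 → ℂ) : ∫ q, f q = ∫ x : ℝ × ℝ, f !₂[x.1, x.2] := by
  have h1 := (EuclideanSpace.volume_preserving_symm_measurableEquiv_toLp (Fin 2)).symm
  have h2 := (volume_preserving_finTwoArrow ℝ).symm
  rw [← h1.integral_comp' f, ← h2.integral_comp']
  rfl

theorem pfun_polar (η : E2 → ℝ) (hη : Continuous η) (k : ℂ) (r : E3) (b : ℝ) (hb : 0 < b)
    (h0 : ∀ θ ρ, b < ρ → η (Phi (ρ, r, θ)) = 0) :
    pfun η k r = ∫ θ in Set.Ioo (-π) π, ∫ ρ in (0:ℝ)..b,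
      (ρ : ℂ) * ((η (Phi (ρ, r, θ)) : ℂ) * Sk k (phs (ρ, r, θ))) := by
  unfold pfun
  rw [← integral_add_left_eq_self _ (proj32 r), to_prod, ← integral_comp_polarCoord_symm,
    polarCoord_target]
  set F : ℝ × ℝ → ℂ := fun x =>
    (x.1 : ℂ) * ((η (Phi (x.1, r, x.2)) : ℂ) * Sk k (phs (x.1, r, x.2))) with hF
  have hFc : Continuous F := by
    have h1 : Continuous (fun x : ℝ × ℝ => (x.1, r, x.2)) := by fun_prop
    exact (Complex.continuous_ofReal.comp continuous_fst).mul
      ((Complex.continuous_ofReal.comp (hη.comp (Phi_smooth.continuous.comp h1))).mul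
        ((Sk_cont k).comp (phs_cont.comp h1)))
  have e1 : ∀ x : ℝ × ℝ, x.1 • ((η (proj32 r + !₂[(polarCoord.symm x).1, (polarCoord.symm x).2]) : ℂ)
      * Skern k (r - emb2 (proj32 r + !₂[(polarCoord.symm x).1, (polarCoord.symm x).2]))) = F x := by
    intro x
    have : proj32 r + !₂[(polarCoord.symm x).1, (polarCoord.symm x).2] = Phi (x.1, r, x.2) := by
      ext i
      fin_cases i <;> simp [proj32, Phi]
    rw [this, Skern_eq, norm_Phi, hF, Complex.real_smul]
  simp only [e1]
  have e2 : ∫ x in Set.Ioi (0:ℝ) ×ˢ Set.Ioo (-π) π, F x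
      = ∫ x in Set.Ioc (0:ℝ) b ×ˢ Set.Ioo (-π) π, F x := by
    apply setIntegral_eq_of_subset_of_forall_sdiff_eq_zero
    · exact measurableSet_Ioi.prod measurableSet_Ioo
    · exact Set.prod_mono Set.Ioc_subset_Ioi_self le_rfl
    · rintro ⟨ρ, θ⟩ ⟨⟨h1, h2⟩, h3⟩
      have : b < ρ := by
        by_contra h
        exact h3 ⟨⟨h1, not_lt.1 h⟩, h2⟩
      simp [hF, h0 θ ρ this]
  rw [e2]
  have e3 : IntegrableOn (fun x : ℝ × ℝ => F x.swap) (Set.Ioo (-π) π ×ˢ Set.Ioc (0:ℝ) b) :=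
    ((hFc.comp continuous_swap).continuousOn.integrableOn_compact
      (isCompact_Icc.prod isCompact_Icc)).mono_set
      (Set.prod_mono Set.Ioo_subset_Icc_self Set.Ioc_subset_Icc_self)
  rw [Measure.volume_eq_prod] at e3 ⊢
  rw [← setIntegral_prod_swap, setIntegral_prod _ e3]
  simp only [intervalIntegral.integral_of_le hb.le]
  rfl

theorem radial (k : ℂ) (hk : k ≠ 0) (p : E3 × ℝ) (b : ℝ) (hb : 0 < b) (g g' : ℝ → ℝ)
    (hg : ∀ ρ, HasDerivAt g (g' ρ) ρ) (hg' : Continuous g') (hgb : g b = 0) (hg0 : g 0 = 1) :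
    ∫ ρ in (0:ℝ)..b, (ρ : ℂ) * ((g ρ : ℂ) * Sk k (phs (ρ, p))) =
      k⁻¹ * Complex.cos (k * (p.1 2 : ℂ)) +
      k⁻¹ * ∫ ρ in (0:ℝ)..b, (g' ρ : ℂ) * Complex.cos (k * (phs (ρ, p) : ℂ)) := by
  have hgc : Continuous g := continuous_iff_continuousAt.2 fun x => (hg x).continuousAt
  have hpc : Continuous (fun ρ : ℝ => phs (ρ, p)) := phs_cont.comp (by fun_prop)
  have hpc' := Complex.continuous_ofReal.comp hpc
  have hgc' := Complex.continuous_ofReal.comp hgc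
  have hgc'' := Complex.continuous_ofReal.comp hg'
  have hcos : Continuous (fun ρ : ℝ => Complex.cos (k * (phs (ρ, p) : ℂ))) :=
    Complex.continuous_cos.comp (continuous_const.mul hpc')
  have c1 : Continuous (fun ρ : ℝ => (ρ : ℂ) * ((g ρ : ℂ) * Sk k (phs (ρ, p)))) :=
    Complex.continuous_ofReal.mul (hgc'.mul ((Sk_cont k).comp hpc))
  have c2 : Continuous (fun ρ : ℝ => k⁻¹ * ((g' ρ : ℂ) * Complex.cos (k * (phs (ρ, p) : ℂ)))) :=
    continuous_const.mul (hgc''.mul hcos)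
  have key := intervalIntegral.integral_eq_sub_of_hasDerivAt_of_le (a := 0) (b := b)
    (f := fun ρ => -k⁻¹ * ((g ρ : ℂ) * Complex.cos (k * (phs (ρ, p) : ℂ))))
    (f' := fun ρ => (ρ : ℂ) * ((g ρ : ℂ) * Sk k (phs (ρ, p))) -
      k⁻¹ * ((g' ρ : ℂ) * Complex.cos (k * (phs (ρ, p) : ℂ)))) hb.le
    ((continuous_const.mul (hgc'.mul hcos)).continuousOn)
    (by
      intro ρ hρ
      have hs := phs_pos hρ.1 p
      have hs' : ((phs (ρ, p) : ℝ) : ℂ) ≠ 0 := by exact_mod_cast hs.ne'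
      have h2 := ((phs_deriv hρ.1 p).ofReal_comp.const_mul k)
      have h3 := (Complex.hasDerivAt_cos (k * ((phs (ρ, p) : ℝ) : ℂ))).comp ρ h2
      have h1 := (((hg ρ).ofReal_comp).mul h3).const_mul (-k⁻¹)
      refine HasDerivAt.congr_deriv (f := fun ρ : ℝ =>
        -k⁻¹ * ((g ρ : ℂ) * Complex.cos (k * (phs (ρ, p) : ℂ)))) h1 ?_
      simp only [Function.comp_apply]
      rw [Sk_of_ne k hs.ne', Complex.ofReal_div]
      field_simp
      ring)
    ((c1.sub c2).intervalIntegrable _ _)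
  rw [intervalIntegral.integral_sub (c1.intervalIntegrable _ _) (c2.intervalIntegrable _ _),
    intervalIntegral.integral_const_mul, hgb, hg0] at key
  have hz : Complex.cos (k * (phs (0, p) : ℂ)) = Complex.cos (k * (p.1 2 : ℂ)) := by
    have : phs (0, p) = |p.1 2| := by simp [phs, Real.sqrt_sq_eq_abs]
    rw [this]
    rcases abs_choice (p.1 2) with h | h <;> rw [h]
    simp
  rw [hz] at key
  simp only [Complex.ofReal_zero, Complex.ofReal_one] at key
  linear_combination key

theorem stmt4 (η : E2 → ℝ) (hη : ContDiff ℝ (⊤ : ℕ∞) η) (hsupp : HasCompactSupport η)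
    (K : Set E3) (hK : IsCompact K) (δ : ℝ) (hδ : 0 < δ)
    (hone : ∀ r ∈ K, ∀ q : E2, ‖q - proj32 r‖ ≤ 2 * δ → η q = 1) :
    ∀ c₀ > (0:ℝ), ∀ n : ℕ, ∃ C : ℝ, ∀ r ∈ K, ∀ k : ℂ,
      1 ≤ k.re → |k.im| ≤ c₀ →
      ‖pfun η k r - 2 * π * k⁻¹ * Complex.cos (k * (r 2 : ℂ))‖ ≤ C / k.re ^ n := by
  intro c₀ hc₀ n
  obtain ⟨Rη, hRη⟩ := hsupp.isCompact.isBounded.exists_norm_le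
  obtain ⟨RK, hRK⟩ := hK.isBounded.exists_norm_le
  set R : ℝ := max (2 * δ) (Rη + RK) with hR
  have hR1 : 2 * δ ≤ R := le_max_left _ _
  have hR2 : Rη + RK ≤ R := le_max_right _ _
  set H : ℝ × (E3 × ℝ) → ℝ := fun x => η (Phi x) with hH
  have hHs : ContDiff ℝ (⊤ : ℕ∞) H := hη.comp Phi_smooth
  set G : ℝ × (E3 × ℝ) → ℝ := fun x => fderiv ℝ H x (1, 0) with hG
  have hGs : ContDiffOn ℝ (⊤ : ℕ∞) G {x | δ < x.1} := slice_smooth hHs.contDiffOn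
  have hGc : Continuous G :=
    ((hHs.continuous_fderiv (by simp)).clm_apply continuous_const)
  have hHd : ∀ ρ p, HasDerivAt (fun t => H (t, p)) (G (ρ, p)) ρ := fun ρ p =>
    slice_deriv (δ := ρ - 1) hHs.contDiffOn (by linarith) p
  have hHone : ∀ r ∈ K, ∀ θ ρ, |ρ| ≤ 2 * δ → H (ρ, r, θ) = 1 := by
    intro r hr θ ρ hρ
    exact hone r hr _ (by rw [norm_Phi_sub]; exact hρ)
  have hHzero : ∀ r ∈ K, ∀ θ ρ, R < ρ → H (ρ, r, θ) = 0 := by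
    intro r hr θ ρ hρ
    by_contra hne
    have h1 := hRη _ (subset_tsupport η hne)
    have h2 := norm_Phi_sub ρ r θ
    have h3 := norm_sub_le (Phi (ρ, r, θ)) (proj32 r)
    have h4 := norm_proj32 r
    have h5 := hRK r hr
    have h6 := le_abs_self ρ
    linarith
  have hG1 : ∀ r ∈ K, ∀ θ ρ, |ρ| < 2 * δ → G (ρ, r, θ) = 0 := by
    intro r hr θ ρ hρ
    have e : (fun t => H (t, r, θ)) =ᶠ[nhds ρ] fun _ => (1 : ℝ) := by
      filter_upwards [continuous_abs.continuousAt.eventually (gt_mem_nhds hρ)] with t ht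
      exact hHone r hr θ t ht.le
    exact ((hHd ρ (r, θ)).congr_of_eventuallyEq e.symm).unique (hasDerivAt_const ρ (1:ℝ))
  have hG2 : ∀ r ∈ K, ∀ θ ρ, R < ρ → G (ρ, r, θ) = 0 := by
    intro r hr θ ρ hρ
    have e : (fun t => H (t, r, θ)) =ᶠ[nhds ρ] fun _ => (0 : ℝ) := by
      filter_upwards [lt_mem_nhds hρ] with t ht
      exact hHzero r hr θ t ht
    exact ((hHd ρ (r, θ)).congr_of_eventuallyEq e.symm).unique (hasDerivAt_const ρ (0:ℝ))
  obtain ⟨C, hC⟩ := nonstat δ (2 * δ) R (3 * δ / 2) (R + 1) (by linarith) (by linarith)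
    (by linarith) (by linarith) (K ×ˢ Set.Icc (-π) π) (hK.prod isCompact_Icc) phs
    (phs_smooth δ hδ)
    (by
      rintro ⟨ρ, p⟩ hx
      have hρ : 0 < ρ := hδ.trans hx
      have h1 := (slice_deriv (phs_smooth δ hδ) hx p).unique (phs_deriv hρ p)
      rw [h1]
      exact (div_pos hρ (phs_pos hρ p)).ne') c₀ n G hGs
    (by
      rintro ⟨r, θ⟩ hp ρ h1 (h2 | h2)
      · exact hG1 r hp.1 θ ρ (by rw [abs_of_pos (hδ.trans h1)]; exact h2)
      · exact hG2 r hp.1 θ ρ h2)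
  refine ⟨max C 0 * (2 * π), fun r hr k hk1 hk2 => ?_⟩
  have hkre : 0 < k.re := by linarith
  have hk0 : k ≠ 0 := by
    rintro rfl
    simp at hkre
  have hkn : k.re ≤ ‖k‖ := Complex.re_le_norm k
  have hb : 0 < R + 1 := by linarith
  set J : ℝ → ℂ := fun θ => ∫ ρ in (0:ℝ)..(R + 1),
    (G (ρ, r, θ) : ℂ) * Complex.cos (k * (phs (ρ, r, θ) : ℂ)) with hJ
  have hGcosc : ∀ θ, Continuous (fun ρ : ℝ =>
      (G (ρ, r, θ) : ℂ) * Complex.cos (k * (phs (ρ, r, θ) : ℂ))) := by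
    intro θ
    have h1 : Continuous (fun ρ : ℝ => (ρ, r, θ)) := by fun_prop
    exact (Complex.continuous_ofReal.comp (hGc.comp h1)).mul (Complex.continuous_cos.comp
      (continuous_const.mul (Complex.continuous_ofReal.comp (phs_cont.comp h1))))
  have hJc : Continuous J := by
    apply intervalIntegral.continuous_parametric_intervalIntegral_of_continuous'
    have h1 : Continuous (fun x : ℝ × ℝ => (x.2, r, x.1)) := by fun_prop
    exact (Complex.continuous_ofReal.comp (hGc.comp h1)).mul (Complex.continuous_cos.comp
      (continuous_const.mul (Complex.continuous_ofReal.comp (phs_cont.comp h1))))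
  have hJb : ∀ θ ∈ Set.Ioo (-π) π, ‖J θ‖ ≤ max C 0 / k.re ^ n := by
    intro θ hθ
    have hp : (r, θ) ∈ K ×ˢ Set.Icc (-π) π := ⟨hr, Set.Ioo_subset_Icc_self hθ⟩
    have hz : ∫ ρ in (0:ℝ)..(3 * δ / 2),
        (G (ρ, r, θ) : ℂ) * Complex.cos (k * (phs (ρ, r, θ) : ℂ)) = 0 := by
      rw [← intervalIntegral.integral_zero (a := (0:ℝ)) (b := 3 * δ / 2) (μ := volume) (E := ℂ)]
      apply intervalIntegral.integral_congr
      intro ρ hρ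
      rw [Set.uIcc_of_le (by linarith)] at hρ
      have := hG1 r hr θ ρ (by rw [abs_of_nonneg hρ.1]; linarith [hρ.2])
      simp [this]
    have hexp : ∀ w : ℂ, IntervalIntegrable (fun ρ : ℝ =>
        (G (ρ, r, θ) : ℂ) * Complex.exp (w * (phs (ρ, r, θ) : ℂ))) volume
        (3 * δ / 2) (R + 1) := by
      intro w
      have h1 : Continuous (fun ρ : ℝ => (ρ, r, θ)) := by fun_prop
      exact ((Complex.continuous_ofReal.comp (hGc.comp h1)).mul (Complex.continuous_exp.comp
        (continuous_const.mul (Complex.continuous_ofReal.comp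
          (phs_cont.comp h1))))).intervalIntegrable _ _
    have hJ2 : J θ = ((∫ ρ in (3 * δ / 2)..(R + 1),
          (G (ρ, r, θ) : ℂ) * Complex.exp ((k * Complex.I) * (phs (ρ, r, θ) : ℂ))) +
        ∫ ρ in (3 * δ / 2)..(R + 1),
          (G (ρ, r, θ) : ℂ) * Complex.exp ((-k * Complex.I) * (phs (ρ, r, θ) : ℂ))) / 2 := by
      simp only [hJ]
      rw [← intervalIntegral.integral_add_adjacent_intervals
        ((hGcosc θ).intervalIntegrable 0 (3 * δ / 2)) ((hGcosc θ).intervalIntegrable _ _), hz, zero_add,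
        ← intervalIntegral.integral_add (hexp _) (hexp _), ← intervalIntegral.integral_div]
      apply intervalIntegral.integral_congr
      intro ρ _
      simp only [Complex.cos]
      rw [show k * Complex.I * (phs (ρ, r, θ) : ℂ) = k * (phs (ρ, r, θ) : ℂ) * Complex.I by ring,
        show -k * Complex.I * (phs (ρ, r, θ) : ℂ) = -(k * (phs (ρ, r, θ) : ℂ)) * Complex.I by ring]
      ring
    have hw : ∀ w : ℂ, ‖w‖ = ‖k‖ → |w.re| ≤ c₀ → ‖∫ ρ in (3 * δ / 2)..(R + 1),
          (G (ρ, r, θ) : ℂ) * Complex.exp (w * (phs (ρ, r, θ) : ℂ))‖ ≤ max C 0 / k.re ^ n := by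
      intro w h1 h2
      have h3 : w ≠ 0 := by
        rw [← norm_pos_iff, h1]
        linarith
      refine (hC _ hp w h3 h2).trans ?_
      rw [h1]
      exact div_le_div₀ (le_max_right _ _) (le_max_left _ _) (by positivity)
        (pow_le_pow_left₀ hkre.le hkn n)
    have b1 := hw (k * Complex.I) (by simp) (by simpa using hk2)
    have b2 := hw (-k * Complex.I) (by simp) (by simpa using hk2)
    rw [hJ2, norm_div, Complex.norm_ofNat]
    have b3 := norm_add_le (∫ ρ in (3 * δ / 2)..(R + 1),
          (G (ρ, r, θ) : ℂ) * Complex.exp ((k * Complex.I) * (phs (ρ, r, θ) : ℂ)))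
        (∫ ρ in (3 * δ / 2)..(R + 1),
          (G (ρ, r, θ) : ℂ) * Complex.exp ((-k * Complex.I) * (phs (ρ, r, θ) : ℂ)))
    linarith
  have hrad : ∀ θ, ∫ ρ in (0:ℝ)..(R + 1), (ρ : ℂ) * ((H (ρ, r, θ) : ℂ) * Sk k (phs (ρ, r, θ))) =
      k⁻¹ * Complex.cos (k * (r 2 : ℂ)) + k⁻¹ * J θ := fun θ =>
    radial k hk0 (r, θ) (R + 1) hb (fun ρ => H (ρ, r, θ)) (fun ρ => G (ρ, r, θ))
      (fun ρ => hHd ρ (r, θ)) (hGc.comp (by fun_prop)) (hHzero r hr θ _ (by linarith))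
      (hHone r hr θ 0 (by rw [abs_zero]; linarith))
  have hpol := pfun_polar η hη.continuous k r (R + 1) hb
    (fun θ ρ hρ => hHzero r hr θ ρ (by linarith))
  have hpol2 : pfun η k r = ∫ θ in Set.Ioo (-π) π,
      (k⁻¹ * Complex.cos (k * (r 2 : ℂ)) + k⁻¹ * J θ) := by
    rw [hpol]
    exact integral_congr_ae (Filter.Eventually.of_forall hrad)
  have hvol : volume.real (Set.Ioo (-π) π) = 2 * π := by
    rw [Real.volume_real_Ioo_of_le (by linarith [Real.pi_pos])]
    ring
  have hJi : IntegrableOn (fun θ => k⁻¹ * J θ) (Set.Ioo (-π) π) :=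
    ((continuous_const.mul hJc).continuousOn.integrableOn_compact isCompact_Icc).mono_set
      Set.Ioo_subset_Icc_self
  have hfin : pfun η k r - 2 * π * k⁻¹ * Complex.cos (k * (r 2 : ℂ)) =
      ∫ θ in Set.Ioo (-π) π, k⁻¹ * J θ := by
    have hci : IntegrableOn (fun _ : ℝ => k⁻¹ * Complex.cos (k * (r 2 : ℂ))) (Set.Ioo (-π) π) :=
      integrableOn_const (by simp)
    rw [hpol2, integral_add hci hJi, setIntegral_const, hvol,
      Complex.real_smul]
    push_cast
    ring
  rw [hfin]
  have hlast := norm_setIntegral_le_of_norm_le_const (μ := volume) (s := Set.Ioo (-π) π)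
    (f := fun θ => k⁻¹ * J θ) (C := max C 0 / k.re ^ n) (by simp)
    (by
      intro θ hθ
      rw [norm_mul, norm_inv]
      have h1 : ‖k‖⁻¹ ≤ 1 := inv_le_one_of_one_le₀ (hk1.trans hkn)
      calc ‖k‖⁻¹ * ‖J θ‖ ≤ 1 * ‖J θ‖ := by gcongr
        _ ≤ _ := by rw [one_mul]; exact hJb θ hθ)
  rw [hvol] at hlast
  refine hlast.trans (le_of_eq ?_)
  ring


end
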